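/- arXiv:2202.01278 — 2 statements merged into one kernel-verified Lean document; each statement's English description precedes it below -/
import Mathlib

section
/- Let m ∈ ℕ, let α > m−1, and let n ≥ m. Then for every x ∈ ℝ, e^{−x} · L^{II,(α)}_{m,n}(x) = −(α+n+1−2m) · ∫_x^∞ e^{−t} · L_m^{(−α−1)}(t) · L_{n−m}^{(α+1)}(t) dt (the improper integral converges since the integrand is e^{−t} times a polynomial). -/
open Finset MeasureTheory

/-- Generalized binomial coefficient `C(t, j) = t(t-1)⋯(t-j+1)/j!`. -/
noncomputable def genBinom (t : ℝ) (j : ℕ) : ℝ :=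
  (∏ i ∈ Finset.range j, (t - i)) / (Nat.factorial j)

/-- Generalized Laguerre polynomial `L_n^{(α)}(x)`, with the convention
`L_n^{(α)} = 0` for negative integer index `n`. -/
noncomputable def laguerre (α : ℝ) (n : ℤ) (x : ℝ) : ℝ :=
  if 0 ≤ n then
    ∑ k ∈ Finset.range (n.toNat + 1),
      ((-1 : ℝ) ^ k / (Nat.factorial k)) * genBinom ((n : ℝ) + α) (n.toNat - k) * x ^ k
  else 0

/-- Type-II exceptional `X_m`-Laguerre polynomial. -/
noncomputable def XLagII (m : ℕ) (α : ℝ) (n : ℕ) (x : ℝ) : ℝ :=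
  x * laguerre (-α - 1) (m : ℤ) x * laguerre (α + 2) ((n : ℤ) - m - 1) x
    + ((m : ℝ) - α - 1) * laguerre (-α - 2) (m : ℤ) x * laguerre (α + 1) ((n : ℤ) - m) x

/-!
For `y = L_k^{(β)}` the function `u = x ^ (β / 2) * y` satisfies the self-adjoint equation
`(x * e ^ (-x) * u')' + e ^ (-x) * (k + β / 2 - β ^ 2 / (4 * x)) * u = 0`, in which the sign of `β`
affects only the eigenvalue `k + β / 2`. With `v = x ^ (-β / 2) * L_m^{(-β)}`, Lagrange's identity
gives `(e ^ (-x) * W)' = (β + k - m) * e ^ (-x) * u * v` for `W = x * (v' * u - v * u')`, which is a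
polynomial. For `β = α + 1` and `k = n - m` it is the type-II exceptional Laguerre polynomial, and
integrating from `x` to `∞` gives the formula.
-/

open Polynomial Filter Asymptotics

section Choose

variable {R : Type*} [CommRing R] [BinomialRing R]

theorem ring_choose_succ_right_eq (r : R) (j : ℕ) :
    Ring.choose r (j + 1) * (j + 1) = Ring.choose r j * (r - j) := by
  simpa [mul_comm] using Ring.choose_smul_choose r (Nat.le_add_right j 1)

theorem ring_choose_mul_succ_eq (r : R) (j : ℕ) :
    Ring.choose r j * (r + 1) = Ring.choose (r + 1) j * (r + 1 - j) := by
  have absorption : Ring.choose (r + 1) (j + 1) * (j + 1) = Ring.choose r j * (r + 1) := by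
    simpa [mul_comm] using Ring.choose_smul_choose (r + 1) (Nat.le_add_left 1 j)
  rw [← absorption, ring_choose_succ_right_eq]

end Choose

section LaguerrePoly

variable {K : Type*} [Field K] [CharZero K]

/-- The generalized Laguerre polynomial `L_n^{(a)}` as an element of `K[X]`, so that its identities
can be proved by comparing coefficients. Unlike in `laguerre`, the degree is a natural number. -/
noncomputable def laguerrePoly (a : K) (n : ℕ) : K[X] :=
  ∑ k ∈ Finset.range (n + 1),
    monomial k ((-1) ^ k / (k.factorial : K) * Ring.choose (n + a) (n - k))

theorem coeff_laguerrePoly (a : K) (n k : ℕ) :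
    (laguerrePoly a n).coeff k =
      if k ≤ n then (-1) ^ k / (k.factorial : K) * Ring.choose (n + a) (n - k) else 0 := by
  simp [laguerrePoly, finsetSum_coeff, coeff_monomial, Finset.sum_ite_eq']

theorem laguerrePoly_zero (a : K) : laguerrePoly a 0 = 1 := by
  simp [laguerrePoly]

theorem derivative_laguerrePoly_succ (a : K) (n : ℕ) :
    derivative (laguerrePoly a (n + 1)) = -laguerrePoly (a + 1) n := by
  ext k
  have weight : (-1) ^ (k + 1) / ((k + 1).factorial : K) * (k + 1) =
      -((-1) ^ k / (k.factorial : K)) := by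
    rw [Nat.factorial_succ, pow_succ]
    push_cast
    field_simp
  simp only [coeff_derivative, coeff_neg, coeff_laguerrePoly, Nat.add_le_add_iff_right,
    Nat.add_sub_add_right]
  split_ifs
  · rw [mul_right_comm, weight, neg_mul]
    push_cast
    ring_nf
  · simp

theorem laguerrePoly_add_one_succ (a : K) (n : ℕ) :
    laguerrePoly (a + 1) (n + 1) = laguerrePoly a (n + 1) + laguerrePoly (a + 1) n := by
  ext k
  simp only [coeff_add, coeff_laguerrePoly]
  rcases lt_trichotomy k (n + 1) with h | rfl | h
  · have pascal := Ring.choose_succ_succ ((n : K) + (a + 1)) (n - k)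
    rw [if_pos h.le, if_pos h.le, if_pos (Nat.lt_succ_iff.mp h),
      Nat.succ_sub (Nat.lt_succ_iff.mp h)]
    push_cast
    rw [show (n : K) + 1 + (a + 1) = n + (a + 1) + 1 by ring, pascal,
      show (n : K) + 1 + a = n + (a + 1) by ring]
    ring
  · simp
  · simp [h.not_ge, (Nat.lt_of_succ_lt h).not_ge]

theorem laguerrePoly_add_one (a : K) (n : ℕ) :
    laguerrePoly (a + 1) n = laguerrePoly a n - derivative (laguerrePoly a n) := by
  cases n with
  | zero => simp [laguerrePoly_zero]
  | succ n => rw [derivative_laguerrePoly_succ, laguerrePoly_add_one_succ, sub_neg_eq_add]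

theorem X_mul_derivative_laguerrePoly_add_one (a : K) (n : ℕ) :
    X * derivative (laguerrePoly (a + 1) n) =
      C (n + a + 1) * laguerrePoly a n - C (a + 1) * laguerrePoly (a + 1) n := by
  ext k
  have coeff_X_mul_derivative (p : K[X]) : (X * derivative p).coeff k = k * p.coeff k := by
    cases k <;> simp [coeff_X_mul, coeff_derivative, mul_comm]
  simp only [coeff_X_mul_derivative, coeff_sub, coeff_C_mul, coeff_laguerrePoly]
  split_ifs with h
  · have shift := ring_choose_mul_succ_eq ((n : K) + a) (n - k)
    rw [Nat.cast_sub h] at shift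
    rw [← add_assoc (n : K) a 1]
    linear_combination (-((-1) ^ k / (k.factorial : K))) * shift
  · simp

theorem laguerrePoly_differential_equation (a : K) (n : ℕ) :
    X * derivative (derivative (laguerrePoly a n)) +
      (C (a + 1) - X) * derivative (laguerrePoly a n) + C (n : K) * laguerrePoly a n = 0 := by
  have ladder := X_mul_derivative_laguerrePoly_add_one a n
  rw [laguerrePoly_add_one, derivative_sub] at ladder
  simp only [C_add, C_1] at ladder ⊢
  linear_combination -ladder

/-- The Wronskian `x * (v' * u - v * u')` of `u = x ^ (β / 2) * L_k^{(β)}` and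
`v = x ^ (-β / 2) * L_m^{(-β)}`, written out as a polynomial. It represents `XLagII` and satisfies
Lagrange's identity. -/
noncomputable def laguerreWronskian (β : K) (m k : ℕ) : K[X] :=
  X * (derivative (laguerrePoly (-β) m) * laguerrePoly β k -
      laguerrePoly (-β) m * derivative (laguerrePoly β k)) -
    C β * (laguerrePoly (-β) m * laguerrePoly β k)

theorem derivative_laguerreWronskian_sub_self (β : K) (m k : ℕ) :
    derivative (laguerreWronskian β m k) - laguerreWronskian β m k =
      C (β + k - m) * (laguerrePoly (-β) m * laguerrePoly β k) := by
  have ode_neg := laguerrePoly_differential_equation (-β) m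
  have ode_pos := laguerrePoly_differential_equation β k
  simp only [laguerreWronskian, derivative_sub, derivative_mul, derivative_X, derivative_C]
  simp only [C_add, C_sub, C_neg, C_1] at ode_neg ode_pos ⊢
  linear_combination laguerrePoly β k * ode_neg - laguerrePoly (-β) m * ode_pos

end LaguerrePoly

theorem isLittleO_eval_exp_pos_mul_atTop (p : ℝ[X]) {b : ℝ} (hb : 0 < b) :
    (fun t ↦ p.eval t) =o[atTop] fun t ↦ Real.exp (b * t) := by
  simp only [eval_eq_sum_range]
  exact IsLittleO.fun_sum fun i _ ↦ (isLittleO_pow_exp_pos_mul_atTop i hb).const_mul_left _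

theorem isLittleO_exp_neg_mul_mul_eval_atTop (p : ℝ[X]) {b c : ℝ} (hcb : c < b) :
    (fun t ↦ Real.exp (-b * t) * p.eval t) =o[atTop] fun t ↦ Real.exp (-c * t) := by
  refine ((isBigO_refl (fun t ↦ Real.exp (-b * t)) atTop).mul_isLittleO
    (isLittleO_eval_exp_pos_mul_atTop p (sub_pos.mpr hcb))).congr_right fun t ↦ ?_
  rw [← Real.exp_add]
  ring_nf

theorem tendsto_exp_neg_mul_mul_eval_atTop (p : ℝ[X]) {b : ℝ} (hb : 0 < b) :
    Tendsto (fun t ↦ Real.exp (-b * t) * p.eval t) atTop (nhds 0) := by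
  have h := isLittleO_exp_neg_mul_mul_eval_atTop p hb
  simpa [isLittleO_one_iff] using h

theorem integrableOn_exp_neg_mul_mul_eval_Ioi (p : ℝ[X]) {b : ℝ} (hb : 0 < b) (x : ℝ) :
    IntegrableOn (fun t ↦ Real.exp (-b * t) * p.eval t) (Set.Ioi x) :=
  integrable_of_isBigO_exp_neg (half_pos hb) (by fun_prop)
    (isLittleO_exp_neg_mul_mul_eval_atTop p (half_lt_self hb)).isBigO

theorem integral_Ioi_exp_neg_mul_mul_eval_derivative_sub (p : ℝ[X]) {b : ℝ} (hb : 0 < b)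
    (x : ℝ) :
    ∫ t in Set.Ioi x, Real.exp (-b * t) * (derivative p - C b * p).eval t =
      -(Real.exp (-b * x) * p.eval x) := by
  have hasDerivAt_exp_mul_eval (t : ℝ) : HasDerivAt (fun t ↦ Real.exp (-b * t) * p.eval t)
      (Real.exp (-b * t) * (derivative p - C b * p).eval t) t := by
    refine (((hasDerivAt_id t).const_mul (-b)).exp.mul (p.hasDerivAt t)).congr_deriv ?_
    simp only [id, eval_sub, eval_mul, eval_C]
    ring
  rw [integral_Ioi_of_hasDerivAt_of_tendsto' (fun t _ ↦ hasDerivAt_exp_mul_eval t)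
    (integrableOn_exp_neg_mul_mul_eval_Ioi _ hb x) (tendsto_exp_neg_mul_mul_eval_atTop p hb),
    zero_sub]

theorem exp_neg_mul_eval_laguerreWronskian (β : ℝ) (m k : ℕ) (x : ℝ) :
    Real.exp (-x) * (laguerreWronskian β m k).eval x =
      -(β + k - m) * ∫ t in Set.Ioi x,
        Real.exp (-t) * (laguerrePoly (-β) m).eval t * (laguerrePoly β k).eval t := by
  have integral_eq :=
    integral_Ioi_exp_neg_mul_mul_eval_derivative_sub (laguerreWronskian β m k) one_pos x
  rw [C_1, one_mul, derivative_laguerreWronskian_sub_self, ← neg_eq_iff_eq_neg] at integral_eq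
  simp only [neg_one_mul, eval_mul, eval_C] at integral_eq
  rw [← integral_eq, neg_mul, ← integral_const_mul]
  congr! 3
  ring

theorem genBinom_eq_choose (t : ℝ) (j : ℕ) : genBinom t j = Ring.choose t j := by
  induction j with
  | zero => simp [genBinom]
  | succ j ih =>
    have hj : (j : ℝ) + 1 ≠ 0 := by positivity
    refine mul_right_cancel₀ hj ?_
    rw [ring_choose_succ_right_eq, ← ih]
    simp only [genBinom, Finset.prod_range_succ, Nat.factorial_succ]
    push_cast
    field_simp

theorem laguerre_natCast (a : ℝ) (n : ℕ) (x : ℝ) :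
    laguerre a n x = (laguerrePoly a n).eval x := by
  simp [laguerre, laguerrePoly, eval_finsetSum, genBinom_eq_choose]

theorem laguerre_add_one_natCast_sub_one (a : ℝ) (n : ℕ) (x : ℝ) :
    laguerre (a + 1) ((n : ℤ) - 1) x = -(derivative (laguerrePoly a n)).eval x := by
  cases n with
  | zero => simp [laguerre, laguerrePoly_zero]
  | succ n =>
    rw [derivative_laguerrePoly_succ, eval_neg, neg_neg, ← laguerre_natCast, Nat.cast_succ,
      add_sub_cancel_right]

theorem XLagII_add (m k : ℕ) (α x : ℝ) :
    XLagII m α (m + k) x = (laguerreWronskian (α + 1) m k).eval x := by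
  have ladder := congrArg (eval x) (X_mul_derivative_laguerrePoly_add_one (-α - 2) m)
  rw [show -α - 2 + 1 = -(α + 1) by ring] at ladder
  rw [XLagII, Nat.cast_add, add_sub_cancel_left, show α + 2 = α + 1 + 1 by ring,
    laguerre_add_one_natCast_sub_one, laguerre_natCast, laguerre_natCast, laguerre_natCast,
    show -α - 1 = -(α + 1) by ring]
  simp only [laguerreWronskian, eval_sub, eval_mul, eval_X, eval_C] at ladder ⊢
  linear_combination -(laguerrePoly (α + 1) k).eval x * ladder

theorem stmt1_general (m : ℕ) (α : ℝ) (n : ℕ) (hmn : m ≤ n) (x : ℝ) :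
    Real.exp (-x) * XLagII m α n x =
      -(α + n + 1 - 2 * m) * ∫ t in Set.Ioi x,
        Real.exp (-t) * laguerre (-α - 1) (m : ℤ) t * laguerre (α + 1) ((n : ℤ) - m) t := by
  obtain ⟨k, rfl⟩ := Nat.exists_eq_add_of_le hmn
  have constant_eq : α + (m + k : ℕ) + 1 - 2 * m = α + 1 + k - m := by
    push_cast
    ring
  rw [XLagII_add, exp_neg_mul_eval_laguerreWronskian, constant_eq, Nat.cast_add,
    add_sub_cancel_left, neg_add']
  simp only [laguerre_natCast]

theorem stmt1 (m : ℕ) (α : ℝ) (hα : (m : ℝ) - 1 < α) (n : ℕ) (hmn : m ≤ n) :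
    ∀ x : ℝ,
      Real.exp (-x) * XLagII m α n x =
        -(α + n + 1 - 2 * m) * ∫ t in Set.Ioi x,
          Real.exp (-t) * laguerre (-α - 1) (m : ℤ) t * laguerre (α + 1) ((n : ℤ) - m) t :=
  stmt1_general m α n hmn
end

section
/- Let m ∈ ℕ and let α, β ∈ ℝ satisfy β > 0, α+1−m > 0, and α+1−m−β ∉ {0,1,…,m−1}, and let n ≥ m. Then the polynomial identity (1+x)·(d/dx)P^{(α,β)}_{m,n}(x) + β·P^{(α,β)}_{m,n}(x) = (−1)^m·((β+n)(α+n−2m+1)/(α+n−m+1))·P_{n−m}^{(α+1,β−1)}(x)·P_m^{(−α−1,β−1)}(x) holds for all x. -/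
open Finset

/-- Jacobi polynomial `P_n^{(α,β)}(x)` for arbitrary real parameters, with the
convention `P_n^{(α,β)} = 0` for negative integer index `n`. -/
noncomputable def jacobi (α β : ℝ) (n : ℤ) (x : ℝ) : ℝ :=
  if 0 ≤ n then
    (Nat.factorial n.toNat : ℝ)⁻¹ *
      ∑ k ∈ Finset.range (n.toNat + 1),
        (n.toNat.choose k : ℝ) *
          (∏ i ∈ Finset.Ico k n.toNat, (α + i + 1)) *
          (∏ i ∈ Finset.range k, (α + β + (n : ℝ) + 1 + i)) *
          ((x - 1) / 2) ^ k
  else 0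

/-- Exceptional `X_m`-Jacobi polynomial. -/
noncomputable def XJac (m : ℕ) (α β : ℝ) (n : ℕ) (x : ℝ) : ℝ :=
  ((-1 : ℝ) ^ m / (α + 1 + n - m)) *
    ((x - 1) * (1 + α + β + n - m) / 2 *
        jacobi (-α - 1) (β - 1) (m : ℤ) x * jacobi (α + 2) β ((n : ℤ) - m - 1) x
      + (α + 1 - m) * jacobi (-α - 2) β (m : ℤ) x * jacobi (α + 1) (β - 1) ((n : ℤ) - m) x)

/-!
In the variable `t = (x - 1) / 2` the Jacobi polynomial with parameters `(a, b)` is an eigenfunction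
of `L_{a,b} = t (1 + t) ∂² + (a + 1 + (a + b + 2) t) ∂`, and the gauge factor `t ^ a` turns
`L_{a,b}` into `L_{-a,b}` up to an additive constant. So `q = P_m^{(-α-1,β-1)}` and
`t ^ (α+1) r`, where `r = P_{n-m}^{(α+1,β-1)}`, are eigenfunctions of the same operator
`L_{-α-1,β-1}`. The contiguous relations of Jacobi polynomials show that the exceptional polynomial
is, up to a constant factor, `W = t ^ (-α) Wr(q, t ^ (α+1) r)`, the Wronskian of these two
eigenfunctions with the power of `t` removed. The theorem is then Lagrange's identity:
`(1 + t) W' + β W` is the difference of the two eigenvalues times `q r`.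
-/

section Polynomials

open Polynomial

section CommRing

variable {R : Type*} [CommRing R]

/-- The hypergeometric differential operator `L_{a,b}` of which the Jacobi polynomials with
parameters `(a, b)` are eigenfunctions, written in the variable `(x - 1) / 2`. -/
noncomputable def jacobiOperator (a b : R) (p : R[X]) : R[X] :=
  X * (1 + X) * derivative (derivative p) + (C (a + 1) + C (a + b + 2) * X) * derivative p

lemma coeff_jacobiOperator (a b : R) (p : R[X]) (k : ℕ) :
    (jacobiOperator a b p).coeff k =
      (k + 1) * (k + a + 1) * p.coeff (k + 1) + k * (k + a + b + 1) * p.coeff k := by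
  have expand : jacobiOperator a b p =
      X * derivative (derivative p) + X * (X * derivative (derivative p))
        + C (a + 1) * derivative p + C (a + b + 2) * (X * derivative p) := by
    rw [jacobiOperator]; ring
  rw [expand]
  rcases k with _ | _ | k <;>
    simp only [coeff_add, coeff_C_mul, coeff_X_mul_zero, coeff_X_mul, coeff_derivative] <;>
    push_cast <;> ring

/-- The twisted Wronskian `X ^ (1 - a) * W(q, X ^ a * r)`, cleared of powers of `X` so that it makes
sense for polynomials and an arbitrary exponent `a`. -/
noncomputable def twistedWronskian (a : R) (q r : R[X]) : R[X] :=
  X * wronskian q r + C a * (q * r)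

lemma derivative_twistedWronskian (a b : R) (q r : R[X]) :
    (1 + X) * derivative (twistedWronskian a q r) + C (b + 1) * twistedWronskian a q r =
      q * jacobiOperator a b r - r * jacobiOperator (-a) b q + C (a * (b + 1)) * (q * r) := by
  simp only [twistedWronskian, jacobiOperator, wronskian, derivative_add, derivative_sub,
    derivative_mul, derivative_C, derivative_X, C_add, C_mul, C_neg, C_1, map_ofNat]
  ring

lemma prod_Ico_succ_succ_add (a : R) (k n : ℕ) :
    ∏ i ∈ Ico (k + 1) (n + 1), (a + i + 1) = ∏ i ∈ Ico k n, (a + 1 + i + 1) := by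
  rw [← prod_Ico_add' (fun i : ℕ => a + (i : R) + 1) k n 1]
  refine prod_congr rfl fun i _ => ?_
  push_cast; ring

end CommRing

section Field

variable {K : Type*} [Field K]

/-- The coefficient of `((x - 1) / 2) ^ k` in the Jacobi polynomial `P_n^{(a,b)}(x)`. -/
def jacobiCoeff (a b : K) (n k : ℕ) : K :=
  (n.factorial : K)⁻¹ * n.choose k * (∏ i ∈ Ico k n, (a + i + 1)) *
    ∏ i ∈ range k, (a + b + n + 1 + i)

/-- The Jacobi polynomial `P_n^{(a,b)}` as a polynomial in the variable `(x - 1) / 2`. -/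
noncomputable def shiftedJacobi (a b : K) (n : ℕ) : K[X] :=
  ∑ k ∈ range (n + 1), monomial k (jacobiCoeff a b n k)

lemma jacobiCoeff_eq_zero_of_lt (a b : K) {n k : ℕ} (h : n < k) : jacobiCoeff a b n k = 0 := by
  simp [jacobiCoeff, Nat.choose_eq_zero_of_lt h]

@[simp]
lemma coeff_shiftedJacobi (a b : K) (n k : ℕ) :
    (shiftedJacobi a b n).coeff k = jacobiCoeff a b n k := by
  simp only [shiftedJacobi, finsetSum_coeff, coeff_monomial, sum_ite_eq', mem_range]
  split_ifs with h
  · rfl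
  · exact (jacobiCoeff_eq_zero_of_lt a b (by lia)).symm

lemma jacobiCoeff_succ_right (a b : K) (n k : ℕ) :
    (k + 1) * (k + a + 1) * jacobiCoeff a b n (k + 1) =
      (n - k) * (n + k + a + b + 1) * jacobiCoeff a b n k := by
  rcases lt_trichotomy k n with h | rfl | h
  · have choose_succ : (n.choose (k + 1) : K) * (k + 1) = n.choose k * (n - k) := by
      rw [← Nat.cast_sub h.le]
      exact_mod_cast congrArg (Nat.cast (R := K)) (Nat.choose_succ_right_eq n k)
    rw [jacobiCoeff, jacobiCoeff, prod_range_succ, prod_eq_prod_Ico_succ_bot h]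
    linear_combination (n.factorial : K)⁻¹ * (k + a + 1) * (∏ i ∈ Ico (k + 1) n, (a + i + 1)) *
      (∏ i ∈ range k, (a + b + n + 1 + i)) * (a + b + n + 1 + k) * choose_succ
  · simp [jacobiCoeff_eq_zero_of_lt]
  · simp [jacobiCoeff_eq_zero_of_lt, h, h.trans (Nat.lt_succ_self k)]

lemma add_mul_jacobiCoeff_add_one_left (a b : K) (n k : ℕ) :
    (k + a + 1) * jacobiCoeff (a + 1) b n k = (a + n + 1) * jacobiCoeff a (b + 1) n k := by
  rcases le_or_gt k n with h | h
  · -- Both sides peel one factor off `∏ i ∈ Ico k (n + 1), (a + i + 1)`.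
    have peel : (a + k + 1) * ∏ i ∈ Ico k n, (a + 1 + i + 1) =
        (∏ i ∈ Ico k n, (a + i + 1)) * (a + n + 1) := by
      rw [← prod_Ico_succ_succ_add, ← prod_Ico_succ_top h fun i : ℕ => a + (i : K) + 1,
        prod_eq_prod_Ico_succ_bot (Nat.lt_succ_of_le h)]
    simp only [jacobiCoeff, show a + 1 + b = a + (b + 1) by ring]
    linear_combination (n.factorial : K)⁻¹ * n.choose k *
      (∏ i ∈ range k, (a + (b + 1) + n + 1 + i)) * peel
  · simp [jacobiCoeff_eq_zero_of_lt, h]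

lemma jacobiCoeff_succ_succ [CharZero K] (a b : K) (n k : ℕ) :
    (k + 1) * jacobiCoeff a b (n + 1) (k + 1) =
      (a + b + n + 2) * jacobiCoeff (a + 1) (b + 1) n k := by
  have choose_succ : (n + 1 : K) * n.choose k = (n + 1).choose (k + 1) * (k + 1) := by
    exact_mod_cast Nat.add_one_mul_choose_eq n k
  have prod_succ : ∏ i ∈ range (k + 1), (a + b + (n + 1 : ℕ) + 1 + i) =
      (∏ i ∈ range k, (a + 1 + (b + 1) + n + 1 + i)) * (a + b + n + 2) := by
    rw [prod_range_succ']
    congr 1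
    · refine prod_congr rfl fun i _ => ?_
      push_cast; ring
    · push_cast; ring
  have hn : (n + 1 : K) ≠ 0 := n.cast_add_one_ne_zero
  have hfac : (n.factorial : K) ≠ 0 := mod_cast n.factorial_ne_zero
  rw [jacobiCoeff, jacobiCoeff, prod_succ, prod_Ico_succ_succ_add, Nat.factorial_succ]
  push_cast
  field_simp
  linear_combination -(∏ i ∈ Ico k n, (a + 1 + i + 1)) *
    (∏ i ∈ range k, (a + 1 + (b + 1) + n + 1 + i)) * (a + b + n + 2) * choose_succ

theorem jacobiOperator_shiftedJacobi (a b : K) (n : ℕ) :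
    jacobiOperator a b (shiftedJacobi a b n) = C (n * (n + a + b + 1)) * shiftedJacobi a b n := by
  ext k
  rw [coeff_jacobiOperator, coeff_C_mul, coeff_shiftedJacobi, coeff_shiftedJacobi]
  linear_combination jacobiCoeff_succ_right a b n k

lemma X_mul_derivative_shiftedJacobi_add (a b : K) (n : ℕ) :
    X * derivative (shiftedJacobi (a + 1) b n) + C (a + 1) * shiftedJacobi (a + 1) b n =
      C (a + n + 1) * shiftedJacobi a (b + 1) n := by
  ext k
  have shift := add_mul_jacobiCoeff_add_one_left a b n k
  cases k <;>
    simp only [coeff_add, coeff_C_mul, coeff_X_mul_zero, coeff_X_mul, coeff_derivative,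
      coeff_shiftedJacobi] <;>
    push_cast at shift ⊢ <;> linear_combination shift

lemma derivative_shiftedJacobi_succ [CharZero K] (a b : K) (n : ℕ) :
    derivative (shiftedJacobi a b (n + 1)) =
      C (a + b + n + 2) * shiftedJacobi (a + 1) (b + 1) n := by
  ext k
  rw [coeff_derivative, coeff_C_mul, coeff_shiftedJacobi, coeff_shiftedJacobi, mul_comm]
  exact jacobiCoeff_succ_succ a b n k

theorem derivative_twistedWronskian_shiftedJacobi (a b : K) (m n : ℕ) :
    (1 + X) * derivative (twistedWronskian a (shiftedJacobi (-a) b m) (shiftedJacobi a b n)) +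
        C (b + 1) * twistedWronskian a (shiftedJacobi (-a) b m) (shiftedJacobi a b n) =
      C ((b + 1 + m + n) * (a + n - m)) * (shiftedJacobi (-a) b m * shiftedJacobi a b n) := by
  have eigenvalue_gap : (b + 1 + m + n) * (a + n - m) =
      n * (n + a + b + 1) - m * (m + -a + b + 1) + a * (b + 1) := by ring
  rw [derivative_twistedWronskian, jacobiOperator_shiftedJacobi, jacobiOperator_shiftedJacobi,
    eigenvalue_gap, C_add, C_sub]
  ring

end Field

lemma jacobi_natCast (a b : ℝ) (n : ℕ) (x : ℝ) :
    jacobi a b n x = (shiftedJacobi a b n).eval ((x - 1) / 2) := by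
  simp [jacobi, shiftedJacobi, jacobiCoeff, eval_finsetSum, mul_sum, mul_assoc]

lemma eval_derivative_shiftedJacobi (a b : ℝ) (n : ℕ) (x : ℝ) :
    (derivative (shiftedJacobi a b n)).eval ((x - 1) / 2) =
      (a + b + n + 1) * jacobi (a + 1) (b + 1) ((n : ℤ) - 1) x := by
  cases n with
  | zero => simp [jacobi, shiftedJacobi]
  | succ n =>
    rw [derivative_shiftedJacobi_succ, Nat.cast_succ (R := ℤ), add_sub_cancel_right, jacobi_natCast,
      eval_mul, eval_C]
    push_cast; ring

lemma hasDerivAt_eval_sub_one_div_two (p : ℝ[X]) (x : ℝ) :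
    HasDerivAt (fun y => p.eval ((y - 1) / 2)) (p.derivative.eval ((x - 1) / 2) / 2) x := by
  have inner : HasDerivAt (fun y : ℝ => (y - 1) / 2) (1 / 2) x :=
    ((hasDerivAt_id x).sub_const 1).div_const 2
  simpa [Function.comp_def, div_eq_mul_inv] using (p.hasDerivAt _).comp x inner

theorem XJac_eq_eval_twistedWronskian (m : ℕ) (α β : ℝ) {n : ℕ} (hmn : m ≤ n) (x : ℝ) :
    XJac m α β n x = (-1) ^ m / (α + 1 + n - m) *
      (twistedWronskian (α + 1) (shiftedJacobi (-(α + 1)) (β - 1) m)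
        (shiftedJacobi (α + 1) (β - 1) (n - m))).eval ((x - 1) / 2) := by
  obtain ⟨N, rfl⟩ := Nat.exists_eq_add_of_le hmn
  have lowered := eval_derivative_shiftedJacobi (α + 1) (β - 1) N x
  have contiguous := congrArg (eval ((x - 1) / 2))
    (X_mul_derivative_shiftedJacobi_add (-α - 2) (β - 1) m)
  rw [show α + 1 + 1 = α + 2 by ring, sub_add_cancel] at lowered
  rw [show -α - 2 + 1 = -(α + 1) by ring, sub_add_cancel] at contiguous
  simp only [eval_add, eval_mul, eval_C, eval_X] at contiguous
  rw [XJac, Nat.cast_add (R := ℤ), add_sub_cancel_left, Nat.add_sub_cancel_left,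
    show -α - 1 = -(α + 1) by ring, jacobi_natCast, jacobi_natCast, jacobi_natCast]
  simp only [twistedWronskian, wronskian, eval_add, eval_sub, eval_mul, eval_C, eval_X, lowered]
  push_cast
  linear_combination ((-1) ^ m / (α + 1 + (m + N) - m)) *
    (shiftedJacobi (α + 1) (β - 1) N).eval ((x - 1) / 2) * contiguous

end Polynomials

theorem stmt9_general (m : ℕ) (α β : ℝ) (n : ℕ) (hmn : m ≤ n) (hα : α + 1 + n - m ≠ 0) (x : ℝ) :
    (1 + x) * deriv (XJac m α β n) x + β * XJac m α β n x =
      (-1 : ℝ) ^ m * ((β + n) * (α + n - 2 * m + 1) / (α + n - m + 1)) *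
        jacobi (α + 1) (β - 1) ((n : ℤ) - m) x * jacobi (-α - 1) (β - 1) (m : ℤ) x := by
  have lagrange := congrArg (Polynomial.eval ((x - 1) / 2))
    (derivative_twistedWronskian_shiftedJacobi (α + 1) (β - 1) m (n - m))
  have XJac_eq := funext (XJac_eq_eval_twistedWronskian m α β hmn)
  rw [XJac_eq, ((hasDerivAt_eval_sub_one_div_two _ x).const_mul _).deriv, ← Nat.cast_sub hmn,
    show -α - 1 = -(α + 1) by ring, jacobi_natCast, jacobi_natCast,
    show α + n - m + 1 = α + 1 + n - m by ring]
  simp only [Polynomial.eval_add, Polynomial.eval_mul, Polynomial.eval_C, Polynomial.eval_X,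
    Polynomial.eval_one, Nat.cast_sub hmn] at lagrange
  field_simp
  linear_combination 2 * lagrange

theorem stmt9 (m : ℕ) (α β : ℝ) (hβ : 0 < β) (hα : 0 < α + 1 - m)
    (hexc : ∀ k : ℕ, k < m → α + 1 - m - β ≠ k) (n : ℕ) (hmn : m ≤ n) :
    ∀ x : ℝ,
      (1 + x) * deriv (XJac m α β n) x + β * XJac m α β n x =
        (-1 : ℝ) ^ m * ((β + n) * (α + n - 2 * m + 1) / (α + n - m + 1)) *
          jacobi (α + 1) (β - 1) ((n : ℤ) - m) x * jacobi (-α - 1) (β - 1) (m : ℤ) x := by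
  have hpos : 0 < α + 1 + n - m := by linarith [n.cast_nonneg (α := ℝ)]
  exact stmt9_general m α β n hmn hpos.ne'
end
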